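/- For every real x with 0 < x < 1, ∫_0^x ln sin(πt) dt = x · ln( sin(πx)/(2π) ) + ln( G(1+x)/G(1−x) ). -/

import Mathlib

open Real

/-- The double gamma function, defined by its Weierstrass product. -/
noncomputable def doubleGamma (x : ℝ) : ℝ :=
  (2 * π) ^ ((x - 1) / 2) *
    Real.exp (-(x - 1) * x / 2 - Real.eulerMascheroniConstant * (x - 1) ^ 2 / 2) *
    ∏' n : ℕ,
      ((1 + (x - 1) / (n + 1)) ^ (n + 1) *
        Real.exp (-(x - 1) + (x - 1) ^ 2 / (2 * (n + 1))))

/-!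
Write `S(t) = sin (πt) / (πt)` (`Real.sinc (π * t)`) and
`L(a, z) = a log (1 + z/a) - z + z²/(2a)`, so that `∑ₙ L(n + 1, z)` is the transcendental part of
`log G(1 + z)`. Integrating the logarithm of Euler's product `S(t) = ∏ₙ (1 - t²/(n + 1)²)` term by
term, and using
`∫₀ˣ log (1 - t²/a²) dt = x log (1 - x²/a²) + L(a, x) - L(a, -x)`,
the first summands reassemble to `x log S(x)` and the others to `log (G(1 + x) / G(1 - x))`, up to
the elementary prefactors of `G`.
-/

open Filter Topology

/-- The logarithm `L(a, z)` of the Weierstrass factor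
`(1 + z / a) ^ a * exp (-z + z ^ 2 / (2 * a))`. The `n`-th factor of the product defining
`doubleGamma (1 + z)`, counted from `n = 0`, is the one with `a = n + 1`. -/
noncomputable def logWeierstrassFactor (a z : ℝ) : ℝ :=
  a * log (1 + z / a) - z + z ^ 2 / (2 * a)

lemma abs_logWeierstrassFactor_le {a z : ℝ} (ha : 0 < a) (hza : 2 * |z| ≤ a) :
    |logWeierstrassFactor a z| ≤ 2 * |z| ^ 3 * (1 / a ^ 2) := by
  have habs : |-z / a| = |z| / a := by rw [abs_div, abs_neg, abs_of_pos ha]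
  have hhalf : |z| / a ≤ 1 / 2 := by rw [div_le_div_iff₀ ha two_pos]; linarith
  have htaylor : logWeierstrassFactor a z =
      a * ((∑ i ∈ Finset.range 2, (-z / a) ^ (i + 1) / ((i : ℝ) + 1)) + log (1 - -z / a)) := by
    rw [logWeierstrassFactor, show 1 - -z / a = 1 + z / a by ring, Finset.sum_range_succ,
      Finset.sum_range_one]
    push_cast
    field_simp
    ring
  have hremainder := abs_log_sub_add_sum_range_le (x := -z / a) (by rw [habs]; linarith) 2
  rw [habs] at hremainder
  calc |logWeierstrassFactor a z|
      ≤ a * ((|z| / a) ^ 3 / (1 - |z| / a)) := by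
        rw [htaylor, abs_mul, abs_of_pos ha]
        gcongr
    _ ≤ a * ((|z| / a) ^ 3 / (1 / 2)) := by
        gcongr
        linarith
    _ = 2 * |z| ^ 3 * (1 / a ^ 2) := by field_simp

lemma summable_one_div_add_one_sq : Summable fun n : ℕ ↦ 1 / ((n : ℝ) + 1) ^ 2 := by
  exact_mod_cast (summable_nat_add_iff 1).2 (summable_one_div_nat_pow.2 one_lt_two)

lemma summable_logWeierstrassFactor (z : ℝ) :
    Summable fun n : ℕ ↦ logWeierstrassFactor (n + 1) z := by
  refine (summable_one_div_add_one_sq.mul_left (2 * |z| ^ 3)).of_norm_bounded_eventually_nat ?_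
  filter_upwards [tendsto_natCast_atTop_atTop.eventually_ge_atTop (2 * |z|)] with n hn
  exact abs_logWeierstrassFactor_le n.cast_add_one_pos (by linarith)

lemma exp_logWeierstrassFactor {z : ℝ} (n : ℕ) (hz : 0 < 1 + z / (n + 1)) :
    exp (logWeierstrassFactor (n + 1) z) =
      (1 + z / (n + 1)) ^ (n + 1) * exp (-z + z ^ 2 / (2 * (n + 1))) := by
  have hpow : (1 + z / ((n : ℝ) + 1)) ^ (n + 1) = exp ((n + 1) * log (1 + z / (n + 1))) := by
    rw [← Nat.cast_add_one, exp_nat_mul, Nat.cast_add_one, exp_log hz]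
  rw [hpow, ← exp_add, logWeierstrassFactor]
  ring_nf

lemma doubleGamma_one_add {z : ℝ} (hz : -1 < z) :
    doubleGamma (1 + z) =
      exp (z / 2 * log (2 * π) + (-z * (1 + z) / 2 - eulerMascheroniConstant * z ^ 2 / 2) +
        ∑' n : ℕ, logWeierstrassFactor (n + 1) z) := by
  have hpos (n : ℕ) : 0 < 1 + z / ((n : ℝ) + 1) := by
    have hn : (0 : ℝ) < n + 1 := n.cast_add_one_pos
    rw [one_add_div hn.ne']
    exact div_pos (by linarith [n.cast_nonneg (α := ℝ)]) hn
  have hprod : ∏' n : ℕ, ((1 + z / ((n : ℝ) + 1)) ^ (n + 1) *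
      exp (-z + z ^ 2 / (2 * (n + 1)))) = exp (∑' n : ℕ, logWeierstrassFactor (n + 1) z) :=
    ((summable_logWeierstrassFactor z).hasSum.rexp.congr_fun fun n ↦
      (exp_logWeierstrassFactor n (hpos n)).symm).tprod_eq
  rw [doubleGamma, add_sub_cancel_left, hprod, rpow_def_of_pos two_pi_pos, mul_comm (log _),
    ← exp_add, ← exp_add]

lemma log_doubleGamma_one_add_div_one_sub {x : ℝ} (hx : |x| < 1) :
    log (doubleGamma (1 + x) / doubleGamma (1 - x)) =
      x * (log (2 * π) - 1) +
        ∑' n : ℕ, (logWeierstrassFactor (n + 1) x - logWeierstrassFactor (n + 1) (-x)) := by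
  obtain ⟨hx₁, hx₂⟩ := abs_lt.1 hx
  rw [sub_eq_add_neg 1 x, doubleGamma_one_add hx₁, doubleGamma_one_add (neg_lt_neg hx₂),
    ← exp_sub, log_exp,
    (summable_logWeierstrassFactor x).tsum_sub (summable_logWeierstrassFactor (-x))]
  ring

lemma sinc_pi_mul_pos {t : ℝ} (ht : |t| < 1) : 0 < sinc (π * t) := by
  rcases eq_or_ne t 0 with rfl | ht₀
  · simp
  · have habs : 0 < π * |t| := by positivity
    have hsinc : sinc (π * t) = sinc (π * |t|) := by
      rcases abs_choice t with h | h <;> simp [h]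
    rw [hsinc, sinc_of_ne_zero habs.ne']
    exact div_pos (sin_pos_of_pos_of_lt_pi habs (mul_lt_of_lt_one_right pi_pos ht)) habs

-- At `y = 0` both sides vanish because `log 0 = 0`.
lemma log_sinc {y : ℝ} (hy : sinc y ≠ 0) : log (sinc y) = log (sin y) - log y := by
  rcases eq_or_ne y 0 with rfl | hy₀
  · simp
  · rw [sinc_of_ne_zero hy₀] at hy ⊢
    exact log_div (div_ne_zero_iff.1 hy).1 hy₀

lemma tendsto_prod_one_sub_sq_div_sq (t : ℝ) :
    Tendsto (fun n ↦ ∏ j ∈ Finset.range n, (1 - t ^ 2 / ((j : ℝ) + 1) ^ 2)) atTop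
      (𝓝 (sinc (π * t))) := by
  rcases eq_or_ne t 0 with rfl | ht
  · simp
  · have hπt : π * t ≠ 0 := mul_ne_zero pi_ne_zero ht
    rw [sinc_of_ne_zero hπt]
    exact ((tendsto_euler_sin_prod t).div_const (π * t)).congr fun n ↦
      mul_div_cancel_left₀ _ hπt

lemma one_sub_sq_div_sq_ne_zero {t : ℝ} (ht : sinc (π * t) ≠ 0) (n : ℕ) :
    1 - t ^ 2 / ((n : ℝ) + 1) ^ 2 ≠ 0 := by
  intro hzero
  refine ht (tendsto_nhds_unique (tendsto_prod_one_sub_sq_div_sq t)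
    (tendsto_const_nhds.congr' ?_))
  filter_upwards [eventually_gt_atTop n] with N hN
  exact (Finset.prod_eq_zero (Finset.mem_range.2 hN) hzero).symm

lemma hasSum_log_one_sub_sq_div_sq {t : ℝ} (ht : sinc (π * t) ≠ 0) :
    HasSum (fun n : ℕ ↦ log (1 - t ^ 2 / ((n : ℝ) + 1) ^ 2)) (log (sinc (π * t))) := by
  have hsq : Summable fun n : ℕ ↦ -(t ^ 2 / ((n : ℝ) + 1) ^ 2) := by
    simpa only [mul_one_div] using (summable_one_div_add_one_sq.mul_left (t ^ 2)).neg
  have hlog : Summable fun n : ℕ ↦ log (1 - t ^ 2 / ((n : ℝ) + 1) ^ 2) :=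
    summable_log_one_add_of_summable hsq
  refine (hlog.hasSum_iff_tendsto_nat).2
    (((tendsto_prod_one_sub_sq_div_sq t).log ht).congr fun n ↦ ?_)
  exact log_prod fun j _ ↦ one_sub_sq_div_sq_ne_zero ht j

lemma integral_log_one_add_div {a : ℝ} (ha : a ≠ 0) (x : ℝ) :
    ∫ t in (0 : ℝ)..x, log (1 + t / a) = (a + x) * log (1 + x / a) - x := by
  rw [intervalIntegral.integral_comp_add_div (fun t ↦ log t) ha 1, integral_log]
  simp only [zero_div, add_zero, log_one, smul_eq_mul]
  field_simp
  ring

lemma intervalIntegrable_log_one_add_div {a : ℝ} (ha : a ≠ 0) (u v : ℝ) :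
    IntervalIntegrable (fun t ↦ log (1 + t / a)) MeasureTheory.volume u v := by
  have h := (intervalIntegral.intervalIntegrable_log' (a := 1 + u / a)
    (b := 1 + v / a)).comp_add_left 1 |>.comp_mul_left (c := a⁻¹)
  simpa [ha, div_eq_inv_mul] using h

lemma abs_le_abs_of_mem_uIcc_zero {t x : ℝ} (ht : t ∈ Set.uIcc 0 x) : |t| ≤ |x| := by
  simpa only [sub_zero] using Set.abs_sub_left_of_mem_uIcc ht

lemma integral_log_one_sub_sq_div_sq {a x : ℝ} (hx : |x| < a) :
    ∫ t in (0 : ℝ)..x, log (1 - t ^ 2 / a ^ 2) =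
      x * log (1 - x ^ 2 / a ^ 2) + (logWeierstrassFactor a x - logWeierstrassFactor a (-x)) := by
  have ha : 0 < a := (abs_nonneg x).trans_lt hx
  have hfactor {t : ℝ} (ht : |t| ≤ |x|) :
      log (1 - t ^ 2 / a ^ 2) = log (1 + t / a) + log (1 + t / -a) := by
    obtain ⟨h₁, h₂⟩ := abs_lt.1 (ht.trans_lt hx)
    have hadd : 1 + t / a ≠ 0 := by rw [one_add_div ha.ne']; exact (div_pos (by linarith) ha).ne'
    have hsub : 1 + t / -a ≠ 0 := by
      rw [div_neg, ← sub_eq_add_neg, one_sub_div ha.ne']; exact (div_pos (by linarith) ha).ne'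
    rw [← log_mul hadd hsub]
    ring_nf
  rw [intervalIntegral.integral_congr fun t ht ↦ hfactor (abs_le_abs_of_mem_uIcc_zero ht),
    intervalIntegral.integral_add (intervalIntegrable_log_one_add_div ha.ne' 0 x)
      (intervalIntegrable_log_one_add_div (neg_ne_zero.2 ha.ne') 0 x),
    integral_log_one_add_div ha.ne', integral_log_one_add_div (neg_ne_zero.2 ha.ne'),
    hfactor le_rfl, logWeierstrassFactor, logWeierstrassFactor, neg_div, div_neg]
  ring

lemma abs_log_one_sub_le {u v : ℝ} (hu : 0 ≤ u) (huv : u ≤ v) (hv : v < 1) :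
    |log (1 - u)| ≤ -log (1 - v) := by
  rw [abs_of_nonpos (log_nonpos (by linarith) (by linarith))]
  exact neg_le_neg (log_le_log (by linarith) (by linarith))

lemma hasSum_integral_log_one_sub_sq_div_sq {x : ℝ} (hx : |x| < 1) :
    HasSum (fun n : ℕ ↦ ∫ t in (0 : ℝ)..x, log (1 - t ^ 2 / ((n : ℝ) + 1) ^ 2))
      (∫ t in (0 : ℝ)..x, log (sinc (π * t))) := by
  have habs {t : ℝ} (ht : t ∈ Set.uIoc 0 x) : |t| ≤ |x| :=
    abs_le_abs_of_mem_uIcc_zero (Set.uIoc_subset_uIcc ht)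
  have hterm (n : ℕ) {t : ℝ} (ht : t ∈ Set.uIoc 0 x) :
      |log (1 - t ^ 2 / ((n : ℝ) + 1) ^ 2)| ≤ -log (1 - x ^ 2 / ((n : ℝ) + 1) ^ 2) := by
    refine abs_log_one_sub_le (by positivity) ?_ ?_
    · have := sq_le_sq.2 (habs ht)
      gcongr
    · rw [← div_pow, sq_lt_one_iff_abs_lt_one, abs_div, abs_of_pos (n.cast_add_one_pos (α := ℝ))]
      exact (div_le_self (abs_nonneg x) (by simp)).trans_lt hx
  have hsummable := (hasSum_log_one_sub_sq_div_sq (sinc_pi_mul_pos hx).ne').summable.neg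
  exact intervalIntegral.hasSum_integral_of_dominated_convergence
    (fun n _ ↦ -log (1 - x ^ 2 / ((n : ℝ) + 1) ^ 2))
    (fun n ↦ Measurable.aestronglyMeasurable (by fun_prop))
    (fun n ↦ .of_forall fun t ht ↦ hterm n ht)
    (.of_forall fun t _ ↦ hsummable)
    intervalIntegrable_const
    (.of_forall fun t ht ↦
      hasSum_log_one_sub_sq_div_sq (sinc_pi_mul_pos ((habs ht).trans_lt hx)).ne')

lemma integral_log_sinc_pi_mul {x : ℝ} (hx : |x| < 1) :
    ∫ t in (0 : ℝ)..x, log (sinc (π * t)) =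
      x * (log (sinc (π * x)) - log (2 * π) + 1) +
        log (doubleGamma (1 + x) / doubleGamma (1 - x)) := by
  have hlog := (hasSum_log_one_sub_sq_div_sq (sinc_pi_mul_pos hx).ne').mul_left x
  have hfactor :=
    ((summable_logWeierstrassFactor x).sub (summable_logWeierstrassFactor (-x))).hasSum
  have hintegral (n : ℕ) := integral_log_one_sub_sq_div_sq (a := n + 1) (x := x)
    (hx.trans_le (by simp))
  rw [(hasSum_integral_log_one_sub_sq_div_sq hx).unique
    ((hlog.add hfactor).congr_fun hintegral), log_doubleGamma_one_add_div_one_sub hx]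
  ring

lemma integral_log_sin_pi_mul {x : ℝ} (hx : |x| < 1) :
    ∫ t in (0 : ℝ)..x, log (sin (π * t)) =
      (∫ t in (0 : ℝ)..x, log (sinc (π * t))) + (x * log (π * x) - x) := by
  have hsin : IntervalIntegrable (fun t ↦ log (sin (π * t))) MeasureTheory.volume 0 x := by
    simpa using (intervalIntegrable_log_sin (a := π * 0) (b := π * x)).comp_mul_left (c := π)
  have hid : IntervalIntegrable (fun t ↦ log (π * t)) MeasureTheory.volume 0 x := by
    simpa using (intervalIntegral.intervalIntegrable_log' (a := π * 0) (b := π * x)).comp_mul_left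
      (c := π)
  have hsinc : ∫ t in (0 : ℝ)..x, log (sinc (π * t)) =
      ∫ t in (0 : ℝ)..x, (log (sin (π * t)) - log (π * t)) :=
    intervalIntegral.integral_congr fun t ht ↦
      log_sinc (sinc_pi_mul_pos ((abs_le_abs_of_mem_uIcc_zero ht).trans_lt hx)).ne'
  have hlog : ∫ t in (0 : ℝ)..x, log (π * t) = x * log (π * x) - x := by
    rw [intervalIntegral.integral_comp_mul_left (fun t ↦ log t) pi_ne_zero, mul_zero,
      integral_log_from_zero, smul_eq_mul]
    field_simp
  rw [hsinc, intervalIntegral.integral_sub hsin hid, hlog, sub_add_cancel]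

theorem integral_log_sin_eq (x : ℝ) (hx0 : 0 < x) (hx1 : x < 1) :
    ∫ t in (0 : ℝ)..x, Real.log (Real.sin (π * t)) =
      x * Real.log (Real.sin (π * x) / (2 * π)) +
        Real.log (doubleGamma (1 + x) / doubleGamma (1 - x)) := by
  have hx : |x| < 1 := by rwa [abs_of_pos hx0]
  have hπx : π * x ≠ 0 := by positivity
  have hsin : sin (π * x) ≠ 0 :=
    (sin_pos_of_pos_of_lt_pi (by positivity) (mul_lt_of_lt_one_right pi_pos hx1)).ne'
  rw [integral_log_sin_pi_mul hx, integral_log_sinc_pi_mul hx, sinc_of_ne_zero hπx,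
    log_div hsin hπx, log_div hsin two_pi_pos.ne']
  ring
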